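/- Let H be a complex Banach space, U ⊆ ℂ an open connected set, and B : U → L(H,H) a holomorphic operator-valued function such that B(z) is a compact operator for every z ∈ U. Define T(z) = I − B(z). If there exists z₀ ∈ U such that T(z₀) is boundedly invertible (i.e., the resolvent set of T is nonempty), then the spectrum σ(T) = {z ∈ U : T(z) is not boundedly invertible} has no accumulation point in U, and every z ∈ σ(T) is an eigenvalue, i.e., there exists u ∈ H, u ≠ 0, with B(z)u = u. -/

import Mathlib

open Filter Topology

/-- Fredholm alternative: an injective compact perturbation of the identity is invertible. -/
lemma aux_isUnit {H : Type*} [NormedAddCommGroup H] [NormedSpace ℂ H] [CompleteSpace H]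
    (C : H →L[ℂ] H) (hC : IsCompactOperator C) (h : ∀ u, C u = u → u = 0) :
    IsUnit ((1 : H →L[ℂ] H) - C) := by
  rcases hC.hasEigenvalue_or_mem_resolventSet (one_ne_zero (α := ℂ)) with h1 | h1
  · obtain ⟨v, hv⟩ := h1.exists_hasEigenvector
    have := hv.apply_eq_smul
    exact absurd (h v (by simpa using this)) hv.2
  · simpa [spectrum.mem_resolventSet_iff] using h1

lemma aux_inj {H : Type*} [NormedAddCommGroup H] [NormedSpace ℂ H] [CompleteSpace H]
    (C : H →L[ℂ] H) (hC : IsUnit ((1 : H →L[ℂ] H) - C)) (u : H) (h : C u = u) : u = 0 := by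
  have h1 := (ContinuousLinearMap.isUnit_iff_bijective.1 hC).1
  apply h1
  simp [h]

lemma aux_finite_ker {H : Type*} [NormedAddCommGroup H] [NormedSpace ℂ H] [CompleteSpace H]
    (C : H →L[ℂ] H) (hC : IsCompactOperator C) :
    FiniteDimensional ℂ (((1 : H →L[ℂ] H) - C).ker) := by
  have hmem : ∀ v ∈ ((1 : H →L[ℂ] H) - C).ker, C v = v := by
    intro v hv
    have : v - C v = 0 := by simpa using hv
    exact (sub_eq_zero.1 this).symm
  have hr := IsCompactOperator.restrict (f := (C : H →ₗ[ℂ] H)) hC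
    (V := ((1 : H →L[ℂ] H) - C).ker) (fun v hv => by
      have h2 := hmem v hv
      change C v ∈ _
      rwa [h2]) (ContinuousLinearMap.isClosed_ker _)
  apply FiniteDimensional.of_isCompactOperator_id (𝕜 := ℂ)
  obtain ⟨K, hK, hK'⟩ := hr
  refine ⟨K, hK, Filter.mem_of_superset hK' ?_⟩
  intro v hv
  have hv2 : (_ : ((1 : H →L[ℂ] H) - C).ker) ∈ K := hv
  have he : ∀ y : ((1 : H →L[ℂ] H) - C).ker, y.1 = C v.1 → y ∈ K → v ∈ K := by
    intro y hy hyK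
    have : y = v := Subtype.ext (hy.trans (hmem v.1 v.2))
    rwa [this] at hyK
  exact he _ rfl hv2

lemma aux_surj {H : Type*} [NormedAddCommGroup H] [NormedSpace ℂ H] [CompleteSpace H]
    (C : H →L[ℂ] H) (hC : IsCompactOperator C)
    (h : Function.Surjective ((1 : H →L[ℂ] H) - C)) :
    IsUnit ((1 : H →L[ℂ] H) - C) := by
  have := aux_finite_ker C hC
  set R := (1 : H →L[ℂ] H) - C with hR
  obtain ⟨p, hp⟩ := Submodule.ClosedComplemented.of_finiteDimensional (𝕜 := ℂ) R.ker
  have hcompl : IsCompl R.ker p.ker := LinearMap.isCompl_of_proj hp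
  have hps : p.range = ⊤ := LinearMap.range_eq_top.2 (fun x => ⟨x, hp x⟩)
  have hRs : R.range = ⊤ := LinearMap.range_eq_top.2 h
  let e := R.equivProdOfSurjectiveOfIsCompl p hRs hps hcompl
  let S : H →L[ℂ] H := (e.symm : (H × R.ker) →L[ℂ] H).comp (ContinuousLinearMap.inl ℂ H R.ker)
  have hS : ∀ y, R (S y) = y := by
    intro y
    have : e (S y) = (y, 0) := by simp [S]
    exact congrArg Prod.fst this
  have hSC : S = 1 - (-(C.comp S)) := by
    ext y
    have := hS y
    simp [hR] at this
    simp
    nth_rewrite 2 [← this]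
    abel
  have hSu : IsUnit S := by
    rw [hSC]
    apply aux_isUnit
    · exact (hC.comp_clm S).neg
    · intro u hu
      have h0 : S u = 0 := by
        rw [hSC]
        simp only [ContinuousLinearMap.sub_apply, hu]
        simp
      have := hS u
      rw [h0] at this
      simpa using this.symm
  have hSb := ContinuousLinearMap.isUnit_iff_bijective.1 hSu
  refine ContinuousLinearMap.isUnit_iff_bijective.2 ⟨?_, h⟩
  intro x y hxy
  obtain ⟨a, rfl⟩ := hSb.2 x
  obtain ⟨b, rfl⟩ := hSb.2 y
  rw [hS, hS] at hxy
  rw [hxy]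

/-- A compact perturbation of the identity becomes invertible after adding a finite rank
operator. -/
lemma aux_perturb {H : Type*} [NormedAddCommGroup H] [NormedSpace ℂ H] [CompleteSpace H]
    (C : H →L[ℂ] H) (hC : IsCompactOperator C) :
    ∃ (N : Submodule ℂ H) (_ : FiniteDimensional ℂ N) (P : H →L[ℂ] N) (F : N →L[ℂ] H),
      IsUnit ((1 : H →L[ℂ] H) - C + F.comp P) := by
  have hfin := aux_finite_ker C hC
  set R := (1 : H →L[ℂ] H) - C with hR
  refine ⟨R.ker, hfin, ?_⟩
  obtain ⟨P, hP⟩ := Submodule.ClosedComplemented.of_finiteDimensional (𝕜 := ℂ) R.ker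
  obtain ⟨Q, hQ⟩ := Submodule.exists_isCompl R.range
  have key : ∀ F : R.ker →L[ℂ] H, IsCompactOperator (C - F.comp P) := by
    intro F
    have : LocallyCompactSpace R.ker := .of_finiteDimensional_of_complete ℂ _
    have h1 : IsCompactOperator F := isCompactOperator_of_locallyCompactSpace_rng F
    exact hC.sub (h1.comp_clm P)
  have keq : ∀ F : R.ker →L[ℂ] H, R + F.comp P = 1 - (C - F.comp P) := by
    intro F; ext x; simp [hR]; abel
  rcases le_total (Module.rank ℂ R.ker) (Module.rank ℂ Q) with hle | hle
  · obtain ⟨f, hf⟩ := rank_le_iff_exists_linearMap.1 hle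
    let F : R.ker →L[ℂ] H := LinearMap.toContinuousLinearMap (Q.subtype ∘ₗ f)
    refine ⟨P, F, ?_⟩
    rw [keq]
    apply aux_isUnit _ (key F)
    intro u hu
    have h0 : R u + F (P u) = 0 := by
      have := congrArg (fun A : H →L[ℂ] H => A u) (keq F)
      simp only [ContinuousLinearMap.sub_apply (1 : H →L[ℂ] H), hu] at this
      simpa using this
    have hFQ : F (P u) ∈ Q := (f (P u)).2
    have hRr : R u ∈ R.range := ⟨u, rfl⟩
    have hFr : F (P u) ∈ R.range := by
      rw [← neg_eq_of_add_eq_zero_right h0]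
      exact neg_mem hRr
    have hF0 : F (P u) = 0 := Submodule.disjoint_def.1 hQ.disjoint _ hFr hFQ
    have hR0 : R u = 0 := by simpa [hF0] using h0
    have hPu : P u = 0 := by
      apply hf
      rw [map_zero]
      exact Subtype.ext hF0
    have := hP ⟨u, hR0⟩
    rw [hPu] at this
    exact (congrArg Subtype.val this).symm
  · obtain ⟨g, hg⟩ := rank_le_iff_exists_linearMap.1 hle
    obtain ⟨f, hf⟩ := LinearMap.exists_leftInverse_of_injective g (LinearMap.ker_eq_bot.2 hg)
    let F : R.ker →L[ℂ] H := LinearMap.toContinuousLinearMap (Q.subtype ∘ₗ f)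
    refine ⟨P, F, ?_⟩
    rw [keq]
    apply aux_surj _ (key F)
    rw [← keq]
    intro y
    have hy : y ∈ R.range ⊔ Q := by rw [hQ.sup_eq_top]; trivial
    obtain ⟨r, ⟨x, hx⟩, q, hq, rfl⟩ := Submodule.mem_sup.1 hy
    refine ⟨x - P x + g ⟨q, hq⟩, ?_⟩
    have h1 : ∀ n : R.ker, R n = 0 := fun n => n.2
    have h2 : F (g ⟨q, hq⟩) = q := congrArg Subtype.val (LinearMap.congr_fun hf ⟨q, hq⟩)
    have hx' : R x = r := hx
    simp [h1, hP, h2, hx']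

lemma aux_local {H : Type*} [NormedAddCommGroup H] [NormedSpace ℂ H] [CompleteSpace H]
    (U : Set ℂ) (hUopen : IsOpen U)
    (B : ℂ → H →L[ℂ] H) (hB : DifferentiableOn ℂ B U)
    (hcpt : ∀ z ∈ U, IsCompactOperator (B z)) (z : ℂ) (hz : z ∈ U) :
    (∀ᶠ w in 𝓝 z, ¬ IsUnit ((1 : H →L[ℂ] H) - B w)) ∨
    (∀ᶠ w in 𝓝[≠] z, IsUnit ((1 : H →L[ℂ] H) - B w)) := by
  obtain ⟨N, hN, P, F, hu⟩ := aux_perturb (B z) (hcpt z hz)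
  let A : ℂ → H →L[ℂ] H := fun w => 1 - B w + F.comp P
  have hBan : AnalyticAt ℂ B z := hB.analyticAt (hUopen.mem_nhds hz)
  have hA : AnalyticAt ℂ A z := (analyticAt_const.sub hBan).add analyticAt_const
  have hinv : AnalyticAt ℂ (fun w => Ring.inverse (A w)) z := by
    obtain ⟨a, ha⟩ := hu
    have := analyticAt_inverse (𝕜 := ℂ) a
    exact AnalyticAt.comp' (f := A) (by change AnalyticAt ℂ _ (1 - B z + F.comp P); rwa [← ha]) hA
  have hAu : ∀ᶠ w in 𝓝 z, IsUnit (A w) :=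
    hA.continuousAt.eventually (Units.isOpen.mem_nhds hu)
  let b := Module.finBasis ℂ N
  let M : ℂ → N →ₗ[ℂ] N := fun w => 1 - (P.comp ((Ring.inverse (A w)).comp F) : N →L[ℂ] N)
  let d : ℂ → ℂ := fun w => (LinearMap.toMatrix b b (M w)).det
  have hd : AnalyticAt ℂ d z := by
    have hentry : ∀ i j, AnalyticAt ℂ (fun w => LinearMap.toMatrix b b (M w) i j) z := by
      intro i j
      let φ : N →L[ℂ] ℂ := LinearMap.toContinuousLinearMap (b.coord i)
      have h1 : AnalyticAt ℂ (fun w => φ (b j) - φ (P (Ring.inverse (A w) (F (b j))))) z := by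
        apply analyticAt_const.sub
        have := ((φ.comp P).comp
          (ContinuousLinearMap.apply ℂ H (F (b j)))).analyticAt (Ring.inverse (A z))
        exact AnalyticAt.comp' (f := fun w => Ring.inverse (A w)) this hinv
      convert h1 using 1
      ext w
      simp [LinearMap.toMatrix_apply, M, φ]
    simp only [d, Matrix.det_apply]
    apply Finset.analyticAt_fun_sum
    intro σ _
    simp only [Units.smul_def, zsmul_eq_mul]
    apply analyticAt_const.mul
    apply Finset.analyticAt_fun_prod
    intro i _
    exact hentry _ _
  have hiff : ∀ᶠ w in 𝓝 z, (IsUnit ((1 : H →L[ℂ] H) - B w) ↔ d w ≠ 0) := by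
    filter_upwards [hAu, hUopen.mem_nhds hz] with w hw hwU
    have hl : ∀ x, Ring.inverse (A w) (A w x) = x := fun x =>
      congrArg (fun T : H →L[ℂ] H => T x) (Ring.inverse_mul_cancel _ hw)
    have hr : ∀ x, A w (Ring.inverse (A w) x) = x := fun x =>
      congrArg (fun T : H →L[ℂ] H => T x) (Ring.mul_inverse_cancel _ hw)
    have hdM : d w = LinearMap.det (M w) := LinearMap.det_toMatrix b (M w)
    rw [hdM, ← isUnit_iff_ne_zero, ← LinearMap.isUnit_iff_isUnit_det, LinearMap.isUnit_iff_ker_eq_bot]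
    constructor
    · intro hun
      rw [LinearMap.ker_eq_bot']
      intro v hv
      have hv' : v = P (Ring.inverse (A w) (F v)) := by
        simpa [M, sub_eq_zero] using hv
      have h1 := hr (F v)
      have h0 : Ring.inverse (A w) (F v) = 0 := by
        apply aux_inj (B w) hun
        simp only [A, ContinuousLinearMap.add_apply, ContinuousLinearMap.comp_apply,
          ContinuousLinearMap.sub_apply] at h1
        change _ - _ + F (P (Ring.inverse (A w) (F v))) = _ at h1
        rw [← hv', add_eq_right, sub_eq_zero] at h1
        exact h1.symm
      rw [hv', h0, map_zero]
    · intro hk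
      apply aux_isUnit _ (hcpt w hwU)
      intro u hu
      have hAw : A w u = F (P u) := by simp [A, hu]
      have hu' : u = Ring.inverse (A w) (F (P u)) := by rw [← hAw, hl]
      have h0 : P u = 0 := by
        apply LinearMap.ker_eq_bot'.1 hk
        simp [M, ← hu']
      rw [hu', h0]; simp
  rcases hd.eventually_eq_zero_or_eventually_ne_zero with h | h
  · left
    filter_upwards [h, hiff] with w h1 h2
    rw [h2]; simpa using h1
  · right
    filter_upwards [h, hiff.filter_mono nhdsWithin_le_nhds] with w h1 h2
    exact h2.2 h1

/-- Spectrum of a holomorphic compact-operator family `T(z) = I - B(z)` with nonempty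
resolvent set: the spectrum has no accumulation point in `U` and each spectral point
is an eigenvalue. -/
theorem stmt0 {H : Type*} [NormedAddCommGroup H] [NormedSpace ℂ H] [CompleteSpace H]
    (U : Set ℂ) (hUopen : IsOpen U) (hUconn : IsConnected U)
    (B : ℂ → H →L[ℂ] H) (hB : DifferentiableOn ℂ B U)
    (hcpt : ∀ z ∈ U, IsCompactOperator (B z))
    (hres : ∃ z₀ ∈ U, IsUnit ((1 : H →L[ℂ] H) - B z₀)) :
    (∀ z ∈ U, ¬ AccPt z (Filter.principal {w | w ∈ U ∧ ¬ IsUnit ((1 : H →L[ℂ] H) - B w)})) ∧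
    (∀ z ∈ U, ¬ IsUnit ((1 : H →L[ℂ] H) - B z) → ∃ u : H, u ≠ 0 ∧ B z u = u) := by
  have hpart2 : ∀ z ∈ U, ¬ IsUnit ((1 : H →L[ℂ] H) - B z) → ∃ u : H, u ≠ 0 ∧ B z u = u := by
    intro z hz hn
    by_contra hcon
    push Not at hcon
    exact hn (aux_isUnit _ (hcpt z hz) fun u hu => by
      by_contra h0
      exact hcon u h0 hu)
  refine ⟨?_, hpart2⟩
  have hlocal := aux_local U hUopen B hB hcpt
  let V : Set ℂ := {z | ∀ᶠ w in 𝓝 z, ¬ IsUnit ((1 : H →L[ℂ] H) - B w)}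
  let W : Set ℂ := {z | z ∈ U ∧ ∀ᶠ w in 𝓝[≠] z, IsUnit ((1 : H →L[ℂ] H) - B w)}
  have hnear : ∀ z ∈ U, IsUnit ((1 : H →L[ℂ] H) - B z) →
      ∀ᶠ w in 𝓝 z, IsUnit ((1 : H →L[ℂ] H) - B w) := by
    intro z hz hu
    have hc : ContinuousAt (fun w => (1 : H →L[ℂ] H) - B w) z :=
      continuousAt_const.sub (hB.continuousOn.continuousAt (hUopen.mem_nhds hz))
    exact hc.eventually (Units.isOpen.mem_nhds hu)
  have hV : IsOpen V := isOpen_setOf_eventually_nhds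
  have hW : IsOpen W := by
    rw [isOpen_iff_mem_nhds]
    rintro z ⟨hz, hw⟩
    rw [eventually_nhdsWithin_iff] at hw
    filter_upwards [hw, hUopen.mem_nhds hz] with w h1 h2
    refine ⟨h2, ?_⟩
    by_cases h : w = z
    · rw [h, eventually_nhdsWithin_iff]; exact hw
    · exact (hnear w h2 (h1 h)).filter_mono nhdsWithin_le_nhds
  have hdisj : Disjoint W V := by
    rw [Set.disjoint_left]
    rintro z ⟨hz, hw⟩ hv
    have hv' := Filter.Eventually.filter_mono (nhdsWithin_le_nhds (s := {z}ᶜ)) hv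
    obtain ⟨w, h1, h2⟩ := (hw.and hv').exists
    exact h2 h1
  have hcov : U ⊆ W ∪ V := by
    intro z hz
    rcases hlocal z hz with h | h
    · exact Or.inr h
    · exact Or.inl ⟨hz, h⟩
  obtain ⟨z₀, hz₀, hu₀⟩ := hres
  have hsub : U ⊆ W := hUconn.isPreconnected.subset_left_of_subset_union hW hV hdisj hcov
    ⟨z₀, hz₀, hz₀, (hnear z₀ hz₀ hu₀).filter_mono nhdsWithin_le_nhds⟩
  intro z hz
  rw [accPt_iff_frequently_nhdsNE, not_frequently]
  filter_upwards [(hsub hz).2] with w hw h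
  exact h.2 hw
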